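/- Let A be a unique representation basis of the integers and let n be a positive integer. For each integer ℓ with 1 ≤ ℓ ≤ n, let N_ℓ be the number of elements of A in the interval ((ℓ−1)n, ℓn] and let M_ℓ be the number of elements of A in the interval [−ℓn, (−ℓ+1)n). Then ∑_{ℓ=1}^{n} (N_ℓ + M_ℓ)² < 14n. -/

import Mathlib

open Filter Set

/-- `repCount A n` is the number of representations of `n` as `a + a'` with
`a ≤ a'` and `a, a' ∈ A`. -/
noncomputable def repCount (A : Set ℤ) (n : ℤ) : ℕ :=
  {p : ℤ × ℤ | p.1 ∈ A ∧ p.2 ∈ A ∧ p.1 ≤ p.2 ∧ p.1 + p.2 = n}.ncard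

/-- `A` is a unique representation basis of `ℤ` if `r_A(n) = 1` for all `n`. -/
def IsUniqueRepBasis (A : Set ℤ) : Prop := ∀ n : ℤ, repCount A n = 1

/-- `countIn A y x` is the number of elements of `A` in the real interval `[y, x]`. -/
noncomputable def countIn (A : Set ℤ) (y x : ℝ) : ℕ :=
  {a : ℤ | a ∈ A ∧ y ≤ (a : ℝ) ∧ (a : ℝ) ≤ x}.ncard

/-!
Unique representation makes `A` a Sidon set: a difference `a - b` of two distinct elements
determines `(a, b)`, and a sum `a + b` of a nonnegative and a negative element does as well.
If `|a|` and `|b|` differ by less than `n`, then `a - b` (equal signs) or `a + b` (opposite signs)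
lies in `(-n, n)`, so `A` has at most `2n + 2n + 2n` ordered pairs of distinct elements of this
kind: one `2n` for equal signs and one for each order of opposite signs.
Since `N_ℓ + M_ℓ` counts the elements of the shell `(ℓ - 1)n < |a| ≤ ℓn`, this gives
`∑ s (s - 1) ≤ 6n` for `s = N_ℓ + M_ℓ`, and `2s² ≤ 3s(s - 1) + 2` for every integer `s`.
-/

/-- A Sidon set: a sum of two elements determines the summands up to order, which is expressed by
equality of unordered pairs. It isolates the uniqueness half of the
definition of a unique representation basis. -/
def IsSidon {G : Type*} [Add G] (A : Set G) : Prop :=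
  ∀ ⦃a b c d : G⦄, a ∈ A → b ∈ A → c ∈ A → d ∈ A → a + b = c + d → s(a, b) = s(c, d)

theorem IsUniqueRepBasis.isSidon {A : Set ℤ} (hA : IsUniqueRepBasis A) : IsSidon A := by
  intro a b c d ha hb hc hd h
  obtain ⟨p, hp⟩ := Set.ncard_eq_one.mp (hA (a + b))
  have eq_rep : ∀ x ∈ A, ∀ y ∈ A, x + y = a + b → s(x, y) = s(p.1, p.2) := by
    intro x hx y hy hxy
    wlog hle : x ≤ y generalizing x y
    · rw [Sym2.eq_swap]
      exact this y hy x hx (by omega) (by omega)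
    · have hmem : (x, y) ∈ ({p} : Set (ℤ × ℤ)) := hp ▸ ⟨hx, hy, hle, hxy⟩
      rw [← Set.mem_singleton_iff.mp hmem]
  exact (eq_rep a ha b hb rfl).trans (eq_rep c hc d hd h.symm).symm

theorem IsSidon.injOn_sub {G : Type*} [AddCommGroup G] {A : Set G} (hA : IsSidon A) :
    InjOn (fun p : G × G => p.1 - p.2) A.offDiag := by
  rintro ⟨a, b⟩ ⟨ha, hb, hab⟩ ⟨c, d⟩ ⟨hc, hd, -⟩ h
  have hcross : s(a, d) = s(c, b) := hA ha hd hc hb (sub_eq_sub_iff_add_eq_add.mp h)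
  obtain ⟨hac, hdb⟩ | ⟨hab', -⟩ := Sym2.eq_iff.mp hcross
  · exact Prod.ext hac hdb.symm
  · exact absurd hab' hab

theorem IsSidon.injOn_add {G : Type*} [Add G] {A B C : Set G} (hA : IsSidon A)
    (hB : B ⊆ A) (hC : C ⊆ A) (hBC : Disjoint B C) :
    InjOn (fun p : G × G => p.1 + p.2) (B ×ˢ C) := by
  rintro ⟨a, b⟩ ⟨ha, hb⟩ ⟨c, d⟩ ⟨hc, hd⟩ h
  obtain ⟨hac, hbd⟩ | ⟨had, -⟩ := Sym2.eq_iff.mp (hA (hB ha) (hC hb) (hB hc) (hC hd) h)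
  · exact Prod.ext hac hbd
  · exact absurd had (hBC.ne_of_mem ha hd)

theorem abs_abs_sub_abs_eq_abs_sub {G : Type*} [AddCommGroup G] [LinearOrder G]
    [IsOrderedAddMonoid G] {a b : G} (h : 0 ≤ a ↔ 0 ≤ b) : |(|a| - |b|)| = |a - b| := by
  rcases le_or_gt 0 a with ha | ha
  · rw [abs_of_nonneg ha, abs_of_nonneg (h.mp ha)]
  · have hb : b < 0 := lt_of_not_ge fun hb => ha.not_ge (h.mpr hb)
    rw [abs_of_neg ha, abs_of_neg hb, neg_sub_neg, abs_sub_comm]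

theorem abs_abs_sub_abs_eq_abs_add {G : Type*} [AddCommGroup G] [LinearOrder G]
    [IsOrderedAddMonoid G] {a b : G} (h : 0 ≤ a ↔ b < 0) : |(|a| - |b|)| = |a + b| := by
  rcases le_or_gt 0 a with ha | ha
  · rw [abs_of_nonneg ha, abs_of_neg (h.mp ha), sub_neg_eq_add]
  · have hb : 0 ≤ b := le_of_not_gt fun hb => ha.not_ge (h.mpr hb)
    rw [abs_of_neg ha, abs_of_nonneg hb, ← neg_add', abs_neg]

theorem card_le_two_mul_of_injOn_of_abs_lt {α : Type*} {T : Finset α} {f : α → ℤ} {n : ℕ}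
    (hinj : InjOn f T) (hlt : ∀ x ∈ T, |f x| < n) : T.card ≤ 2 * n := by
  have hmaps : MapsTo f T (Finset.Ioo (-n : ℤ) n) := fun x hx => by
    simpa [abs_lt] using hlt x hx
  have hcard : T.card ≤ (Finset.Ioo (-n : ℤ) n).card := Finset.card_le_card_of_injOn f hmaps hinj
  rw [Int.card_Ioo] at hcard
  omega

theorem IsSidon.card_le_of_abs_sub_lt {A : Set ℤ} (hA : IsSidon A) {T : Finset (ℤ × ℤ)} {n : ℕ}
    (hT : (T : Set (ℤ × ℤ)) ⊆ A.offDiag) (hlt : ∀ p ∈ T, |p.1 - p.2| < n) : T.card ≤ 2 * n :=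
  card_le_two_mul_of_injOn_of_abs_lt (hA.injOn_sub.mono hT) hlt

theorem IsSidon.card_le_of_abs_add_lt {A B C : Set ℤ} (hA : IsSidon A) (hB : B ⊆ A) (hC : C ⊆ A)
    (hBC : Disjoint B C) {T : Finset (ℤ × ℤ)} {n : ℕ} (hT : (T : Set (ℤ × ℤ)) ⊆ B ×ˢ C)
    (hlt : ∀ p ∈ T, |p.1 + p.2| < n) : T.card ≤ 2 * n :=
  card_le_two_mul_of_injOn_of_abs_lt ((hA.injOn_add hB hC hBC).mono hT) hlt

theorem IsSidon.card_le_of_abs_sub_abs_lt {A : Set ℤ} (hA : IsSidon A) {T : Finset (ℤ × ℤ)}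
    {n : ℕ} (hT : (T : Set (ℤ × ℤ)) ⊆ A.offDiag) (hlt : ∀ p ∈ T, |(|p.1| - |p.2|)| < n) :
    T.card ≤ 6 * n := by
  have hdisj : Disjoint (A ∩ Ici 0) (A ∩ Iio 0) :=
    (Ici_disjoint_Iio le_rfl).mono inter_subset_right inter_subset_right
  have same_sign : (T.filter fun p => 0 ≤ p.1 ↔ 0 ≤ p.2).card ≤ 2 * n := by
    refine hA.card_le_of_abs_sub_lt (fun p hp => hT (Finset.mem_of_mem_filter p hp)) fun p hp => ?_
    obtain ⟨hpT, hsign⟩ := Finset.mem_filter.mp hp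
    exact abs_abs_sub_abs_eq_abs_sub hsign ▸ hlt p hpT
  have nonneg_neg : (T.filter fun p => 0 ≤ p.1 ∧ p.2 < 0).card ≤ 2 * n := by
    refine hA.card_le_of_abs_add_lt inter_subset_left inter_subset_left hdisj
      (fun p hp => ?_) fun p hp => ?_ <;> obtain ⟨hpT, h1, h2⟩ := Finset.mem_filter.mp hp
    · exact ⟨⟨(hT hpT).1, h1⟩, ⟨(hT hpT).2.1, h2⟩⟩
    · exact abs_abs_sub_abs_eq_abs_add (iff_of_true h1 h2) ▸ hlt p hpT
  have neg_nonneg : (T.filter fun p => p.1 < 0 ∧ 0 ≤ p.2).card ≤ 2 * n := by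
    refine hA.card_le_of_abs_add_lt inter_subset_left inter_subset_left hdisj.symm
      (fun p hp => ?_) fun p hp => ?_ <;> obtain ⟨hpT, h1, h2⟩ := Finset.mem_filter.mp hp
    · exact ⟨⟨(hT hpT).1, h1⟩, ⟨(hT hpT).2.1, h2⟩⟩
    · exact abs_abs_sub_abs_eq_abs_add (iff_of_false h1.not_ge h2.not_gt) ▸ hlt p hpT
  have hcover : T ⊆ (T.filter fun p => 0 ≤ p.1 ↔ 0 ≤ p.2) ∪
      ((T.filter fun p => 0 ≤ p.1 ∧ p.2 < 0) ∪ T.filter fun p => p.1 < 0 ∧ 0 ≤ p.2) := by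
    grind
  have hcard := (Finset.card_le_card hcover).trans
    ((Finset.card_union_le _ _).trans (Nat.add_le_add_left (Finset.card_union_le _ _) _))
  omega

theorem pairwiseDisjoint_offDiag {ι α : Type*} {I : Set ι} {R : ι → Finset α}
    (hR : I.PairwiseDisjoint R) : I.PairwiseDisjoint fun i => (R i).offDiag := by
  intro i hi j hj hij
  refine Finset.disjoint_left.mpr fun p hpi hpj => ?_
  exact Finset.disjoint_left.mp (hR hi hj hij) (Finset.mem_offDiag.mp hpi).1
    (Finset.mem_offDiag.mp hpj).1

theorem two_mul_card_sq_le {α : Type*} (R : Finset α) :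
    2 * R.card ^ 2 ≤ 3 * R.offDiag.card + 2 := by
  rw [Finset.offDiag_card]
  have hle : R.card ≤ R.card * R.card := Nat.le_mul_self _
  -- The difference of the two sides is `(s - 1) * (s - 2)`.
  have hprod : 0 ≤ ((R.card : ℤ) - 1) * (R.card - 2) := by
    rcases le_or_gt R.card 1 with h | h
    · exact mul_nonneg_of_nonpos_of_nonpos (by omega) (by omega)
    · exact mul_nonneg (by omega) (by omega)
  zify [hle]
  linarith

theorem IsSidon.sum_card_sq_le {ι : Type*} {A : Set ℤ} (hA : IsSidon A) {I : Finset ι}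
    {R : ι → Finset ℤ} {n : ℕ} (hRA : ∀ i ∈ I, (R i : Set ℤ) ⊆ A)
    (hR : (I : Set ι).PairwiseDisjoint R)
    (hlt : ∀ i ∈ I, ∀ a ∈ R i, ∀ b ∈ R i, |a| - |b| < n) :
    ∑ i ∈ I, (R i).card ^ 2 ≤ 9 * n + I.card := by
  have hpairs : ∑ i ∈ I, (R i).offDiag.card ≤ 6 * n := by
    rw [← Finset.card_biUnion (pairwiseDisjoint_offDiag hR)]
    refine hA.card_le_of_abs_sub_abs_lt (fun p hp => ?_) fun p hp => ?_
    · obtain ⟨i, hi, h⟩ := Finset.mem_biUnion.mp hp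
      exact offDiag_mono (hRA i hi) (Finset.coe_offDiag (R i) ▸ h)
    · obtain ⟨i, hi, h⟩ := Finset.mem_biUnion.mp hp
      obtain ⟨h1, h2, -⟩ := Finset.mem_offDiag.mp h
      exact abs_sub_lt_iff.mpr ⟨hlt i hi _ h1 _ h2, hlt i hi _ h2 _ h1⟩
  have hsq : 2 * ∑ i ∈ I, (R i).card ^ 2 ≤ 3 * ∑ i ∈ I, (R i).offDiag.card + 2 * I.card := calc
    2 * ∑ i ∈ I, (R i).card ^ 2 = ∑ i ∈ I, 2 * (R i).card ^ 2 := Finset.mul_sum ..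
    _ ≤ ∑ i ∈ I, (3 * (R i).offDiag.card + 2) :=
      Finset.sum_le_sum fun i _ => two_mul_card_sq_le (R i)
    _ = 3 * ∑ i ∈ I, (R i).offDiag.card + 2 * I.card := by
      rw [Finset.sum_add_distrib, ← Finset.mul_sum, Finset.sum_const, smul_eq_mul, mul_comm _ 2]
  omega

open scoped Classical in
/-- The finite set of those `a ∈ A` with `(ℓ - 1)n < |a| ≤ ℓn`, which for `ℓ ≥ 1` joins the two
mirror-image intervals counted by `N_ℓ` and `M_ℓ`. The ambient `Icc` serves only to make it a
`Finset`. -/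
noncomputable def absShell (A : Set ℤ) (n ℓ : ℕ) : Finset ℤ :=
  {a ∈ Finset.Icc (-(ℓ * n : ℤ)) (ℓ * n) | a ∈ A ∧ ((ℓ : ℤ) - 1) * n < |a|}

theorem mem_absShell {A : Set ℤ} {n ℓ : ℕ} {a : ℤ} :
    a ∈ absShell A n ℓ ↔ a ∈ A ∧ ((ℓ : ℤ) - 1) * n < |a| ∧ |a| ≤ ℓ * n := by
  simp only [absShell, Finset.mem_filter, Finset.mem_Icc, abs_le]
  tauto

theorem le_of_mem_absShell {A : Set ℤ} {n ℓ m : ℕ} {a : ℤ} (hℓ : a ∈ absShell A n ℓ)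
    (hm : a ∈ absShell A n m) : ℓ ≤ m := by
  have hlt : ((ℓ : ℤ) - 1) * n < m * n :=
    (mem_absShell.mp hℓ).2.1.trans_le (mem_absShell.mp hm).2.2
  have := lt_of_mul_lt_mul_right hlt n.cast_nonneg
  omega

theorem pairwise_disjoint_absShell (A : Set ℤ) (n : ℕ) :
    Pairwise (Function.onFun Disjoint (absShell A n)) := fun _ _ hne =>
  Finset.disjoint_left.mpr fun _ hℓ hm =>
    hne (le_antisymm (le_of_mem_absShell hℓ hm) (le_of_mem_absShell hm hℓ))

theorem abs_sub_abs_lt_of_mem_absShell {A : Set ℤ} {n ℓ : ℕ} {a b : ℤ} (ha : a ∈ absShell A n ℓ)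
    (hb : b ∈ absShell A n ℓ) : |a| - |b| < n := by
  have hle := (mem_absShell.mp ha).2.2
  have hlt := (mem_absShell.mp hb).2.1
  linarith

theorem card_absShell (A : Set ℤ) (n : ℕ) {ℓ : ℕ} (hℓ : 1 ≤ ℓ) :
    (absShell A n ℓ).card = (A ∩ Ioc (((ℓ : ℤ) - 1) * n) (ℓ * n)).ncard +
      (A ∩ Ico (-((ℓ : ℤ) * n)) ((-(ℓ : ℤ) + 1) * n)).ncard := by
  have hnonneg : 0 ≤ ((ℓ : ℤ) - 1) * n := mul_nonneg (by omega) n.cast_nonneg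
  have hneg : (-(ℓ : ℤ) + 1) * n = -(((ℓ : ℤ) - 1) * n) := by ring
  rw [hneg, ← Set.ncard_union_eq, ← Set.ncard_coe_finset]
  · congr 1
    ext a
    simp only [Finset.mem_coe, mem_absShell, mem_union, mem_inter_iff, mem_Ioc, mem_Ico]
    grind
  · refine Set.disjoint_left.mpr fun a ha hb => ?_
    exact absurd (ha.2.1.trans hb.2.2) (by linarith)

theorem urb_sum_add_sq_lt_general {A : Set ℤ} (hA : IsSidon A) (n k : ℕ) :
    ∑ ℓ ∈ Finset.Icc 1 k, ((A ∩ Ioc (((ℓ : ℤ) - 1) * n) (ℓ * n)).ncard +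
      (A ∩ Ico (-((ℓ : ℤ) * n)) ((-(ℓ : ℤ) + 1) * n)).ncard) ^ 2 ≤ 9 * n + k := by
  calc
    _ = ∑ ℓ ∈ Finset.Icc 1 k, (absShell A n ℓ).card ^ 2 :=
      Finset.sum_congr rfl fun ℓ hℓ => by rw [card_absShell A n (Finset.mem_Icc.mp hℓ).1]
    _ ≤ 9 * n + (Finset.Icc 1 k).card :=
      hA.sum_card_sq_le (fun _ _ _ ha => (mem_absShell.mp ha).1)
        ((pairwise_disjoint_absShell A n).set_pairwise _)
        fun _ _ _ ha _ hb => abs_sub_abs_lt_of_mem_absShell ha hb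
    _ = 9 * n + k := by rw [Nat.card_Icc, Nat.add_sub_cancel]

/-- For a unique representation basis, `∑_{ℓ=1}^{n} (N_ℓ + M_ℓ)² < 14n`. -/
theorem urb_sum_add_sq_lt (A : Set ℤ) (hA : IsUniqueRepBasis A) (n : ℕ) (hn : 0 < n)
    (N M : ℕ → ℕ)
    (hN : ∀ ℓ : ℕ, N ℓ = {a : ℤ | a ∈ A ∧ ((ℓ : ℤ) - 1) * n < a ∧ a ≤ (ℓ : ℤ) * n}.ncard)
    (hM : ∀ ℓ : ℕ, M ℓ = {a : ℤ | a ∈ A ∧ -((ℓ : ℤ) * n) ≤ a ∧ a < (-(ℓ : ℤ) + 1) * n}.ncard) :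
    ∑ ℓ ∈ Finset.Icc 1 n, (N ℓ + M ℓ) ^ 2 < 14 * n := by
  simp only [hN, hM]
  exact (urb_sum_add_sq_lt_general hA.isSidon n n).trans_lt (by omega)
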